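/- Let N ≥ 2, 0 < s < 1, 1 ≤ p ≤ N/(N-2s), and let L be a stable operator of the form Lu(x) = ∫[u(x+y)+u(x-y)-2u(x)]|y|^{-(N+2s)}a(y/|y|)dy with 0 ≤ a ≤ D on 𝕊^{N-1}, a even, and a ≥ d > 0 on Σ_{ν₀,τ₀}(0) ∩ 𝕊^{N-1} for some cone of positive aperture. If u ∈ C²(ℝ^N) is nonnegative, satisfies the growth bound limsup_{|x|→∞} |u(x)|/|x|^{2s-δ} < ∞ for some δ ∈ (0,2s], and -Lu ≥ u^p in ℝ^N, then u ≡ 0. -/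

import Mathlib

open MeasureTheory
open scoped RealInnerProductSpace

/-!
Test the inequality against the dilated Gaussian `g (r • x)`, `g x = exp (-‖x‖²)`. Since
`g (x + y) + g (x - y) = 2 g x g y cosh (2⟪x, y⟫) ≥ 2 g x g y`, its second differences are at
least `-2 (1 - g (r • y)) g (r • x)`, and the stable scaling of the Lévy measure gives
`∫ u ^ p g (r • x) ≤ κ r ^ σ ∫ u g (r • x)` with `σ = 2s`. Young's inequality bounds the right
side by `A κ ∫ g` plus a multiple of the left side with factor `κ A ^ (1 - p) r ^ (n - p (n - σ))`.
In the range `p (n - σ) ≤ n` this factor is at most `1 / 2` for suitable `A` and all small `r`, so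
`u ^ p` is integrable. Once it is, `min (r ^ σ u) (A ^ (1 - p) u ^ p)` tends to zero in `L¹` as
`r → 0` by dominated convergence, which leaves `∫ u ^ p ≤ A κ ∫ g` for every `A > 0`.
-/

section

open Filter Metric Module Topology

section SecondDifferences

variable {E : Type*} [NormedAddCommGroup E]

/-- The symmetric second difference of `u` at `x` with step `y`, which is integrated against a
Lévy measure in `y` to give a nonlocal operator. -/
def secondDiff (u : E → ℝ) (x y : E) : ℝ := u (x + y) + u (x - y) - 2 * u x

/-- The order of magnitude, as a function of the step `y`, of the second differences of a `C²`
function of growth `β`; a Lévy measure is admissible for such functions if it integrates this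
weight. -/
noncomputable def levyWeight (β : ℝ) (y : E) : ℝ := if ‖y‖ ≤ 1 then ‖y‖ ^ 2 else ‖y‖ ^ β

lemma levyWeight_nonneg (β : ℝ) (y : E) : 0 ≤ levyWeight β y := by
  unfold levyWeight; split_ifs <;> positivity

lemma measurable_levyWeight [MeasurableSpace E] [OpensMeasurableSpace E] (β : ℝ) :
    Measurable (levyWeight β : E → ℝ) :=
  Measurable.ite (measurableSet_le measurable_norm measurable_const) (by fun_prop) (by fun_prop)

lemma continuous_secondDiff {u : E → ℝ} (hu : Continuous u) :
    Continuous fun z : E × E => secondDiff u z.1 z.2 := by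
  unfold secondDiff; fun_prop

lemma continuous_secondDiff_left {u : E → ℝ} (hu : Continuous u) (y : E) :
    Continuous fun x => secondDiff u x y := by
  unfold secondDiff; fun_prop

lemma hasCompactSupport_secondDiff_left {ψ : E → ℝ} (hψ : HasCompactSupport ψ) (y : E) :
    HasCompactSupport fun x => secondDiff ψ x y :=
  ((hψ.comp_homeomorph (Homeomorph.addRight y)).add
    (hψ.comp_homeomorph (Homeomorph.subRight y))).sub hψ.mul_left

lemma neg_mul_le_secondDiff_max_sub_zero {φ m : E → ℝ} {ε : ℝ} {x y : E} (hφ : 0 ≤ φ x)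
    (hm : 0 ≤ m y) (h : -(2 * m y * φ x) ≤ secondDiff φ x y) :
    -(2 * m y * φ x) ≤ secondDiff (fun z => max (φ z - ε) 0) x y := by
  dsimp only [secondDiff] at h ⊢
  have hmφ : 0 ≤ 2 * m y * φ x := by positivity
  have hadd := le_max_left (φ (x + y) - ε) 0
  have hsub := le_max_left (φ (x - y) - ε) 0
  have hadd₀ := le_max_right (φ (x + y) - ε) 0
  have hsub₀ := le_max_right (φ (x - y) - ε) 0
  rcases max_cases (φ x - ε) 0 with ⟨hx, -⟩ | ⟨hx, -⟩ <;> rw [hx] <;> linarith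

lemma hasCompactSupport_max_sub_zero {X : Type*} [TopologicalSpace X] [R1Space X] {φ : X → ℝ}
    (hφ : Tendsto φ (cocompact X) (𝓝 0)) {ε : ℝ} (hε : 0 < ε) :
    HasCompactSupport fun x => max (φ x - ε) 0 := by
  obtain ⟨K, hK, hKφ⟩ := mem_cocompact.1 (hφ.eventually_lt_const hε)
  exact HasCompactSupport.intro hK fun x hx => max_eq_right (sub_nonpos.2 (hKφ hx).le)

lemma integral_mul_secondDiff_comm [MeasureSpace E] [BorelSpace E]
    [(volume : Measure E).IsAddHaarMeasure] {u ψ : E → ℝ} (hu : Continuous u) (hψ : Continuous ψ)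
    (hψc : HasCompactSupport ψ) (y : E) :
    ∫ x, ψ x * secondDiff u x y = ∫ x, u x * secondDiff ψ x y := by
  have hint (z : E) : Integrable fun x => ψ x * u (x + z) :=
    (hψ.mul (by fun_prop)).integrable_of_hasCompactSupport hψc.mul_right
  have hint' (z : E) : Integrable fun x => ψ (x + z) * u x :=
    ((by fun_prop : Continuous fun x => ψ (x + z)).mul hu).integrable_of_hasCompactSupport
      (hψc.comp_homeomorph (Homeomorph.addRight z)).mul_right
  have hshift (z : E) : ∫ x, ψ x * u (x + z) = ∫ x, ψ (x + -z) * u x := by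
    rw [← integral_add_right_eq_self (fun x => ψ (x + -z) * u x) z]
    simp only [add_neg_cancel_right]
  have hlin {F G H : E → ℝ} (hF : Integrable F) (hG : Integrable G) (hH : Integrable H) :
      ∫ x, (F x + G x - 2 * H x) = (∫ x, F x) + (∫ x, G x) - 2 * ∫ x, H x := by
    rw [← integral_const_mul, ← integral_add hF hG]
    exact integral_sub (hF.add hG) (hH.const_mul 2)
  calc ∫ x, ψ x * secondDiff u x y
      = ∫ x, (ψ x * u (x + y) + ψ x * u (x + -y) - 2 * (ψ x * u (x + 0))) := by
        congr with x; rw [secondDiff, add_zero, sub_eq_add_neg x]; ring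
    _ = ∫ x, (ψ (x + -y) * u x + ψ (x + - -y) * u x - 2 * (ψ (x + -0) * u x)) := by
        rw [hlin (hint _) (hint _) (hint _), hlin (hint' _) (hint' _) (hint' _), hshift, hshift,
          hshift]
    _ = ∫ x, u x * secondDiff ψ x y := by
        congr with x; rw [secondDiff, neg_zero, neg_neg, add_zero, sub_eq_add_neg x]; ring

section NormedSpace

variable [NormedSpace ℝ E] [FiniteDimensional ℝ E]

lemma exists_abs_secondDiff_le_sq {u : E → ℝ} (hu : ContDiff ℝ 2 u) (ρ : ℝ) :
    ∃ K : ℝ, ∀ x y : E, ‖x‖ ≤ ρ → ‖y‖ ≤ 1 → |secondDiff u x y| ≤ K * ‖y‖ ^ 2 := by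
  have hdu : ContDiff ℝ 1 (fderiv ℝ u) := hu.fderiv_right (by norm_num)
  obtain ⟨K, hK⟩ := hdu.contDiffOn.exists_lipschitzOnWith one_ne_zero
    (convex_closedBall (0 : E) (ρ + 1)) (isCompact_closedBall _ _)
  refine ⟨2 * K, fun x y hx hy => ?_⟩
  have hderiv (w : E) : HasFDerivAt (fun w => u (x + w) + u (x - w))
      (fderiv ℝ u (x + w) - fderiv ℝ u (x - w)) w := by
    have hd (z : E) := (hu.differentiable two_ne_zero z).hasFDerivAt
    refine (((hasFDerivAt_comp_add_left x).2 (hd (x + w))).fun_add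
      ((hd (x - w)).comp w ((hasFDerivAt_id w).const_sub x))).congr_fderiv ?_
    ext v
    simp [sub_eq_add_neg]
  have hbound (w : E) (hw : w ∈ closedBall 0 ‖y‖) :
      ‖fderiv ℝ u (x + w) - fderiv ℝ u (x - w)‖ ≤ 2 * K * ‖y‖ := by
    rw [mem_closedBall_zero_iff] at hw
    have hadd : x + w ∈ closedBall 0 (ρ + 1) := by
      simpa using norm_add_le_of_le hx (hw.trans hy)
    have hsub : x - w ∈ closedBall 0 (ρ + 1) := by
      simpa using norm_sub_le_of_le hx (hw.trans hy)
    calc ‖fderiv ℝ u (x + w) - fderiv ℝ u (x - w)‖ ≤ K * ‖(x + w) - (x - w)‖ :=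
          hK.norm_sub_le hadd hsub
      _ = K * (2 * ‖w‖) := by
          rw [show x + w - (x - w) = (2 : ℝ) • w by module, norm_smul, Real.norm_two]
      _ ≤ 2 * K * ‖y‖ := by
          rw [← mul_assoc, mul_comm (K : ℝ)]; gcongr
  have h := (convex_closedBall (0 : E) ‖y‖).norm_image_sub_le_of_norm_hasFDerivWithin_le
    (fun w _ => (hderiv w).hasFDerivWithinAt) hbound
    (mem_closedBall_self (norm_nonneg y)) (mem_closedBall_zero_iff.2 le_rfl)
  calc |secondDiff u x y| = ‖u (x + y) + u (x - y) - (u (x + 0) + u (x - 0))‖ := by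
        rw [add_zero, sub_zero, ← two_mul]; rfl
    _ ≤ 2 * K * ‖y‖ * ‖y - 0‖ := h
    _ = 2 * K * ‖y‖ ^ 2 := by rw [sub_zero]; ring

lemma exists_abs_le_one_add_norm_rpow {u : E → ℝ} (hu : Continuous u) {β C R : ℝ} (hβ : 0 ≤ β)
    (h : ∀ x, R ≤ ‖x‖ → |u x| ≤ C * ‖x‖ ^ β) :
    ∃ K : ℝ, ∀ x, |u x| ≤ K * (1 + ‖x‖) ^ β := by
  obtain ⟨M, hM⟩ := (isCompact_closedBall (0 : E) R).exists_bound_of_continuousOn hu.continuousOn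
  refine ⟨|C| + |M|, fun x => ?_⟩
  rcases le_total R ‖x‖ with hx | hx
  · calc |u x| ≤ C * ‖x‖ ^ β := h x hx
      _ ≤ (|C| + |M|) * (1 + ‖x‖) ^ β := by
        gcongr
        · exact (le_abs_self C).trans (le_add_of_nonneg_right (abs_nonneg M))
        · exact le_add_of_nonneg_left zero_le_one
  · calc |u x| ≤ M := hM x (by simpa using hx)
      _ ≤ |C| + |M| := (le_abs_self M).trans (le_add_of_nonneg_left (abs_nonneg C))
      _ ≤ (|C| + |M|) * (1 + ‖x‖) ^ β := le_mul_of_one_le_right (by positivity)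
        (Real.one_le_rpow (le_add_of_nonneg_right (norm_nonneg x)) hβ)

lemma exists_abs_secondDiff_le_levyWeight {u : E → ℝ} (hu : ContDiff ℝ 2 u) {β C : ℝ}
    (hβ : 0 ≤ β) (hgrowth : ∀ x, |u x| ≤ C * (1 + ‖x‖) ^ β) (ρ : ℝ) :
    ∃ K : ℝ, ∀ x y : E, ‖x‖ ≤ ρ → |secondDiff u x y| ≤ K * levyWeight β y := by
  obtain ⟨K, hK⟩ := exists_abs_secondDiff_le_sq hu ρ
  have hC : 0 ≤ C := (abs_nonneg _).trans (by simpa using hgrowth 0)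
  refine ⟨max K (4 * (C * (2 + ρ) ^ β)), fun x y hx => ?_⟩
  unfold levyWeight
  split_ifs with hy
  · exact (hK x y hx hy).trans (by gcongr; exact le_max_left _ _)
  · have hρ : 0 ≤ ρ := (norm_nonneg x).trans hx
    have hbound (z : E) (hz : ‖z‖ ≤ ρ + ‖y‖) : |u z| ≤ C * (2 + ρ) ^ β * ‖y‖ ^ β := by
      refine (hgrowth z).trans ?_
      rw [mul_assoc, ← Real.mul_rpow (by positivity) (by positivity)]
      gcongr
      nlinarith
    calc |secondDiff u x y| ≤ |u (x + y)| + |u (x - y)| + 2 * |u x| := by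
          refine (abs_sub _ _).trans (add_le_add (abs_add_le _ _) ?_)
          rw [abs_mul, abs_two]
      _ ≤ 4 * (C * (2 + ρ) ^ β) * ‖y‖ ^ β := by
          linarith [hbound (x + y) (norm_add_le_of_le hx le_rfl),
            hbound (x - y) (norm_sub_le_of_le hx le_rfl),
            hbound x (hx.trans (le_add_of_nonneg_right (norm_nonneg y)))]
      _ ≤ max K (4 * (C * (2 + ρ) ^ β)) * ‖y‖ ^ β := by gcongr; exact le_max_right _ _

section Testing

variable [MeasureSpace E] [BorelSpace E] [(volume : Measure E).IsAddHaarMeasure]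
  {μ : Measure E} {β C : ℝ} {u f : E → ℝ}

lemma integrable_mul_secondDiff_prod (hβ : 0 ≤ β)
    (hμ : Integrable (levyWeight β) μ) (hu : ContDiff ℝ 2 u)
    (hgrowth : ∀ x, |u x| ≤ C * (1 + ‖x‖) ^ β) {ψ : E → ℝ} (hψ : Continuous ψ)
    (hψc : HasCompactSupport ψ) :
    Integrable (fun z : E × E => ψ z.1 * secondDiff u z.1 z.2) (volume.prod μ) := by
  obtain ⟨ρ, hρ⟩ := hψc.isCompact.isBounded.subset_closedBall (0 : E)
  obtain ⟨K, hK⟩ := exists_abs_secondDiff_le_levyWeight hu hβ hgrowth ρ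
  refine ((hψ.integrable_of_hasCompactSupport hψc).norm.mul_prod (hμ.const_mul K)).mono' ?_
    (.of_forall fun ⟨x, y⟩ => ?_)
  · exact ((hψ.comp continuous_fst).mul
      (continuous_secondDiff hu.continuous)).measurable.aestronglyMeasurable
  · rw [norm_mul]
    by_cases hx : x ∈ tsupport ψ
    · exact mul_le_mul_of_nonneg_left (hK x y (by simpa using hρ hx)) (norm_nonneg _)
    · simp [image_eq_zero_of_notMem_tsupport hx]

variable [SFinite μ] {φ m : E → ℝ}

-- The cutoff makes the test function compactly supported, which Fubini needs because the second
-- differences of `u` are only locally bounded in `x`.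
lemma integral_mul_max_sub_zero_le (hβ : 0 ≤ β) (hμ : Integrable (levyWeight β) μ)
    (hu : ContDiff ℝ 2 u) (hu0 : ∀ x, 0 ≤ u x) (hgrowth : ∀ x, |u x| ≤ C * (1 + ‖x‖) ^ β)
    (hf : Continuous f) (hsup : ∀ x, f x ≤ -∫ y, secondDiff u x y ∂μ)
    (hφ : Continuous φ) (hφ0 : ∀ x, 0 ≤ φ x) (hφlim : Tendsto φ (cocompact E) (𝓝 0))
    (huφ : Integrable fun x => u x * φ x) (hm0 : ∀ y, 0 ≤ m y) (hm : Integrable m μ)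
    (hφm : ∀ x y, -(2 * m y * φ x) ≤ secondDiff φ x y) {ε : ℝ} (hε : 0 < ε) :
    ∫ x, f x * max (φ x - ε) 0 ≤ 2 * (∫ y, m y ∂μ) * ∫ x, u x * φ x := by
  set ψ : E → ℝ := fun x => max (φ x - ε) 0
  have hψ : Continuous ψ := by fun_prop
  have hψc : HasCompactSupport ψ := hasCompactSupport_max_sub_zero hφlim hε
  have hprod := integrable_mul_secondDiff_prod hβ hμ hu hgrowth hψ hψc
  have hcomm (y : E) := integral_mul_secondDiff_comm hu.continuous hψ hψc y
  have hψm (y : E) : -(2 * m y * ∫ x, u x * φ x) ≤ ∫ x, u x * secondDiff ψ x y := by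
    rw [← integral_const_mul, ← integral_neg]
    refine integral_mono (huφ.const_mul _).neg ((hu.continuous.mul
      (continuous_secondDiff_left hψ y)).integrable_of_hasCompactSupport
        (hasCompactSupport_secondDiff_left hψc y).mul_left) fun x => ?_
    calc -(2 * m y * (u x * φ x)) = u x * -(2 * m y * φ x) := by ring
      _ ≤ u x * secondDiff ψ x y := mul_le_mul_of_nonneg_left
        (neg_mul_le_secondDiff_max_sub_zero (hφ0 x) (hm0 y) (hφm x y)) (hu0 x)
  have hinner : Integrable (fun y => ∫ x, u x * secondDiff ψ x y) μ := by
    simpa only [hcomm] using hprod.integral_prod_right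
  calc ∫ x, f x * ψ x
      ≤ ∫ x, -∫ y, ψ x * secondDiff u x y ∂μ := by
        refine integral_mono ((hf.mul hψ).integrable_of_hasCompactSupport hψc.mul_left)
          hprod.integral_prod_left.neg fun x => ?_
        calc f x * ψ x ≤ (-∫ y, secondDiff u x y ∂μ) * ψ x :=
              mul_le_mul_of_nonneg_right (hsup x) (le_max_right _ _)
          _ = -∫ y, ψ x * secondDiff u x y ∂μ := by
              rw [integral_const_mul, neg_mul, mul_comm]
    _ = ∫ y, -(∫ x, u x * secondDiff ψ x y) ∂μ := by
        rw [integral_neg, integral_neg, integral_integral_swap hprod]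
        simp only [hcomm]
    _ ≤ ∫ y, 2 * m y * (∫ x, u x * φ x) ∂μ :=
        integral_mono hinner.neg ((hm.const_mul 2).mul_const _) fun y => neg_le.1 (hψm y)
    _ = 2 * (∫ y, m y ∂μ) * ∫ x, u x * φ x := by
        rw [integral_mul_const, integral_const_mul]

lemma integral_mul_le_of_le_neg_integral_secondDiff (hβ : 0 ≤ β)
    (hμ : Integrable (levyWeight β) μ) (hu : ContDiff ℝ 2 u) (hu0 : ∀ x, 0 ≤ u x)
    (hgrowth : ∀ x, |u x| ≤ C * (1 + ‖x‖) ^ β)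
    (hf : Continuous f) (hsup : ∀ x, f x ≤ -∫ y, secondDiff u x y ∂μ)
    (hφ : Continuous φ) (hφ0 : ∀ x, 0 ≤ φ x) (hφlim : Tendsto φ (cocompact E) (𝓝 0))
    (huφ : Integrable fun x => u x * φ x) (hfφ : Integrable fun x => f x * φ x)
    (hm0 : ∀ y, 0 ≤ m y) (hm : Integrable m μ)
    (hφm : ∀ x y, -(2 * m y * φ x) ≤ secondDiff φ x y) :
    ∫ x, f x * φ x ≤ 2 * (∫ y, m y ∂μ) * ∫ x, u x * φ x := by
  have hlim : Tendsto (fun ε : ℝ => ∫ x, f x * max (φ x - ε) 0) (𝓝[>] 0)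
      (𝓝 (∫ x, f x * φ x)) := by
    refine tendsto_integral_filter_of_dominated_convergence _
      (.of_forall fun ε => Continuous.aestronglyMeasurable (by fun_prop)) ?_ hfφ.norm
      (.of_forall fun x => ?_)
    · filter_upwards [self_mem_nhdsWithin] with ε (hε : 0 < ε)
      refine .of_forall fun x => ?_
      rw [norm_mul, norm_mul, Real.norm_of_nonneg (le_max_right _ _), Real.norm_of_nonneg (hφ0 x)]
      exact mul_le_mul_of_nonneg_left (max_le (sub_le_self _ hε.le) (hφ0 x)) (norm_nonneg _)
    · have h : Continuous fun ε : ℝ => f x * max (φ x - ε) 0 := by fun_prop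
      simpa [hφ0 x] using h.continuousWithinAt (s := Set.Ioi 0) (x := 0) |>.tendsto
  refine le_of_tendsto hlim ?_
  filter_upwards [self_mem_nhdsWithin] with ε hε
  exact integral_mul_max_sub_zero_le hβ hμ hu hu0 hgrowth hf hsup hφ hφ0 hφlim huφ hm0 hm hφm hε

end Testing

end NormedSpace

end SecondDifferences

section Gaussian

variable {E : Type*} [NormedAddCommGroup E]

/-- The unnormalized Gaussian `exp (-‖x‖²)`; its dilations `x ↦ gaussian (r • x)` are the test
functions. -/
noncomputable def gaussian (x : E) : ℝ := Real.exp (-‖x‖ ^ 2)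

lemma gaussian_pos (x : E) : 0 < gaussian x := Real.exp_pos _

lemma gaussian_le_one (x : E) : gaussian x ≤ 1 :=
  Real.exp_le_one_iff.2 (neg_nonpos.2 (sq_nonneg _))

@[fun_prop]
lemma continuous_gaussian : Continuous (gaussian : E → ℝ) := by
  unfold gaussian; fun_prop

lemma tendsto_gaussian_cocompact [ProperSpace E] :
    Tendsto (gaussian : E → ℝ) (cocompact E) (𝓝 0) :=
  Real.tendsto_exp_neg_atTop_nhds_zero.comp <|
    (tendsto_pow_atTop two_ne_zero).comp tendsto_norm_cocompact_atTop

lemma one_sub_gaussian_le_levyWeight {β : ℝ} (hβ : 0 ≤ β) (y : E) :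
    1 - gaussian y ≤ levyWeight β y := by
  unfold levyWeight
  split_ifs with hy
  · exact sub_le_comm.1 (Real.one_sub_le_exp_neg _)
  · exact (sub_le_self _ (gaussian_pos y).le).trans (Real.one_le_rpow (not_le.1 hy).le hβ)

lemma integrable_one_sub_gaussian [MeasurableSpace E] [OpensMeasurableSpace E] {μ : Measure E}
    {β : ℝ} (hβ : 0 ≤ β) (hμ : Integrable (levyWeight β) μ) :
    Integrable (fun y => 1 - gaussian y) μ := by
  refine hμ.mono' (continuous_const.sub continuous_gaussian).measurable.aestronglyMeasurable
    (.of_forall fun y => ?_)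
  rw [Real.norm_of_nonneg (sub_nonneg.2 (gaussian_le_one y))]
  exact one_sub_gaussian_le_levyWeight hβ y

lemma gaussian_smul [NormedSpace ℝ E] (r : ℝ) (x : E) :
    gaussian (r • x) = Real.exp (-r ^ 2 * ‖x‖ ^ 2) := by
  rw [gaussian, norm_smul, mul_pow, Real.norm_eq_abs, sq_abs, neg_mul]

variable [InnerProductSpace ℝ E]

-- `g (x ± y) = g x * g y * exp (∓2⟪x, y⟫)`, so the two terms add up to `2 * g x * g y` times
-- `cosh (2⟪x, y⟫) ≥ 1`.
lemma two_mul_gaussian_mul_gaussian_le (x y : E) :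
    2 * (gaussian x * gaussian y) ≤ gaussian (x + y) + gaussian (x - y) := by
  have hadd : gaussian (x + y) = gaussian x * gaussian y * Real.exp (-(2 * ⟪x, y⟫)) := by
    simp only [gaussian, ← Real.exp_add, norm_add_sq_real]; ring_nf
  have hsub : gaussian (x - y) = gaussian x * gaussian y * Real.exp (2 * ⟪x, y⟫) := by
    simp only [gaussian, ← Real.exp_add, norm_sub_sq_real]; ring_nf
  calc 2 * (gaussian x * gaussian y)
      ≤ 2 * (gaussian x * gaussian y) * Real.cosh (2 * ⟪x, y⟫) :=
        le_mul_of_one_le_right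
          (mul_nonneg two_pos.le (mul_pos (gaussian_pos x) (gaussian_pos y)).le)
          (Real.one_le_cosh _)
    _ = gaussian (x + y) + gaussian (x - y) := by rw [Real.cosh_eq, hadd, hsub]; ring

lemma neg_mul_le_secondDiff_gaussian_smul (r : ℝ) (x y : E) :
    -(2 * (1 - gaussian (r • y)) * gaussian (r • x)) ≤
      secondDiff (fun z => gaussian (r • z)) x y := by
  have h := two_mul_gaussian_mul_gaussian_le (r • x) (r • y)
  rw [← smul_add, ← smul_sub] at h
  dsimp only [secondDiff]
  linarith

variable [FiniteDimensional ℝ E] [MeasurableSpace E] [BorelSpace E]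

lemma integrable_gaussian_smul {r : ℝ} (hr : r ≠ 0) :
    Integrable fun x : E => gaussian (r • x) := by
  simp only [gaussian_smul]
  have hr2 : 0 < r ^ 2 := by positivity
  refine .of_integral_ne_zero ?_
  rw [GaussianFourier.integral_rexp_neg_mul_sq_norm hr2]
  positivity

lemma rpow_finrank_mul_integral_gaussian_smul {r : ℝ} (hr : 0 < r) :
    r ^ (finrank ℝ E : ℝ) * ∫ x : E, gaussian (r • x) = ∫ x : E, gaussian x := by
  rw [Measure.integral_comp_smul_of_nonneg volume gaussian r (hR := hr.le), smul_eq_mul,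
    Real.rpow_natCast, mul_inv_cancel_left₀ (by positivity)]

lemma exists_one_add_rpow_mul_exp_le (m : ℝ) {b : ℝ} (hb : 0 < b) :
    ∃ K : ℝ, ∀ t : ℝ, 0 ≤ t →
      (1 + t) ^ m * Real.exp (-(2 * b) * t ^ 2) ≤ K * Real.exp (-b * t ^ 2) := by
  obtain ⟨n, hn⟩ := exists_nat_ge m
  refine ⟨n.factorial * Real.exp (1 + 1 / (4 * b)), fun t ht => ?_⟩
  have hpow : (1 + t) ^ m ≤ n.factorial * Real.exp (1 + t) :=
    calc (1 + t) ^ m ≤ (1 + t) ^ (n : ℝ) :=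
          Real.rpow_le_rpow_of_exponent_le (le_add_of_nonneg_right ht) hn
      _ = (1 + t) ^ n := Real.rpow_natCast _ _
      _ ≤ n.factorial * Real.exp (1 + t) :=
          (div_le_iff₀' (by positivity)).1 (Real.pow_div_factorial_le_exp _ (by positivity) n)
  have hsq : t ≤ 1 / (4 * b) + b * t ^ 2 := by
    have : 0 ≤ b * (t - 1 / (2 * b)) ^ 2 := by positivity
    have : b * (t - 1 / (2 * b)) ^ 2 = b * t ^ 2 + 1 / (4 * b) - t := by field_simp; ring
    linarith
  calc (1 + t) ^ m * Real.exp (-(2 * b) * t ^ 2)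
      ≤ n.factorial * Real.exp (1 + t) * Real.exp (-(2 * b) * t ^ 2) := by gcongr
    _ = n.factorial * Real.exp (1 + t + -(2 * b) * t ^ 2) := by rw [mul_assoc, ← Real.exp_add]
    _ ≤ n.factorial * Real.exp (1 + 1 / (4 * b) + -b * t ^ 2) :=
        mul_le_mul_of_nonneg_left (Real.exp_le_exp.2 (by linarith)) (by positivity)
    _ = n.factorial * Real.exp (1 + 1 / (4 * b)) * Real.exp (-b * t ^ 2) := by
        rw [Real.exp_add, mul_assoc]

lemma integrable_mul_gaussian_smul {f : E → ℝ} (hf : AEStronglyMeasurable f) {C m : ℝ}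
    (hgrowth : ∀ x, |f x| ≤ C * (1 + ‖x‖) ^ m) {r : ℝ} (hr : r ≠ 0) :
    Integrable fun x => f x * gaussian (r • x) := by
  obtain ⟨K, hK⟩ := exists_one_add_rpow_mul_exp_le m (b := r ^ 2 / 2) (by positivity)
  have hC : 0 ≤ C := (abs_nonneg _).trans (by simpa using hgrowth 0)
  have hint : Integrable fun x : E => Real.exp (-(r ^ 2 / 2) * ‖x‖ ^ 2) := by
    simpa only [gaussian_smul, div_pow, Real.sq_sqrt zero_le_two] using
      integrable_gaussian_smul (E := E) (r := r / √2) (by positivity)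
  refine (hint.const_mul (C * K)).mono'
    (hf.mul (by fun_prop : Continuous fun x : E => gaussian (r • x)).aestronglyMeasurable)
    (.of_forall fun x => ?_)
  calc ‖f x * gaussian (r • x)‖ ≤ C * (1 + ‖x‖) ^ m * gaussian (r • x) := by
        rw [norm_mul, Real.norm_of_nonneg (gaussian_pos _).le]
        exact mul_le_mul_of_nonneg_right (hgrowth x) (gaussian_pos _).le
    _ = C * ((1 + ‖x‖) ^ m * Real.exp (-(2 * (r ^ 2 / 2)) * ‖x‖ ^ 2)) := by
        rw [gaussian_smul, mul_div_cancel₀ _ two_ne_zero, mul_assoc]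
    _ ≤ C * (K * Real.exp (-(r ^ 2 / 2) * ‖x‖ ^ 2)) :=
        mul_le_mul_of_nonneg_left (hK _ (norm_nonneg x)) hC
    _ = C * K * Real.exp (-(r ^ 2 / 2) * ‖x‖ ^ 2) := (mul_assoc _ _ _).symm

end Gaussian

section Young

lemma le_add_rpow_mul_rpow {p t η : ℝ} (hp : 1 ≤ p) (ht : 0 ≤ t) (hη : 0 < η) :
    t ≤ η + η ^ (1 - p) * t ^ p := by
  rcases le_total t η with h | h
  · exact h.trans (le_add_of_nonneg_right (by positivity))
  · have ht' : 0 < t := hη.trans_le h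
    calc t = t ^ (1 - p) * t ^ p := by rw [← Real.rpow_add ht', sub_add_cancel, Real.rpow_one]
      _ ≤ η ^ (1 - p) * t ^ p :=
        mul_le_mul_of_nonneg_right
          (Real.rpow_le_rpow_of_nonpos hη h (sub_nonpos.2 hp)) (by positivity)
      _ ≤ η + η ^ (1 - p) * t ^ p := le_add_of_nonneg_left hη.le

-- `le_add_rpow_mul_rpow` with `η = A * r ^ (n - σ)`.
lemma rpow_mul_le_add_rpow_mul_rpow {p σ n t A r : ℝ} (hp : 1 ≤ p) (ht : 0 ≤ t) (hA : 0 < A)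
    (hr : 0 < r) :
    r ^ σ * t ≤ A * r ^ n + A ^ (1 - p) * r ^ (n - p * (n - σ)) * t ^ p := by
  have hη : 0 < A * r ^ (n - σ) := by positivity
  calc r ^ σ * t
      ≤ r ^ σ * (A * r ^ (n - σ) + (A * r ^ (n - σ)) ^ (1 - p) * t ^ p) := by
        gcongr; exact le_add_rpow_mul_rpow hp ht hη
    _ = A * (r ^ σ * r ^ (n - σ)) + A ^ (1 - p) * (r ^ σ * r ^ ((n - σ) * (1 - p))) * t ^ p := by
        rw [Real.mul_rpow hA.le (by positivity), ← Real.rpow_mul hr.le]; ring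
    _ = A * r ^ n + A ^ (1 - p) * r ^ (n - p * (n - σ)) * t ^ p := by
        rw [← Real.rpow_add hr, ← Real.rpow_add hr]; ring_nf

lemma rpow_mul_le_add_min {p σ n t A r : ℝ} (hp : 1 ≤ p) (hpσ : p * (n - σ) ≤ n) (ht : 0 ≤ t)
    (hA : 0 < A) (hr : 0 < r) (hr1 : r ≤ 1) :
    r ^ σ * t ≤ A * r ^ n + min (r ^ σ * t) (A ^ (1 - p) * t ^ p) := by
  rw [← min_add_add_left]
  refine le_min (le_add_of_nonneg_left (by positivity)) ?_
  refine (rpow_mul_le_add_rpow_mul_rpow (n := n) hp ht hA hr).trans ?_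
  gcongr
  exact mul_le_of_le_one_right (by positivity) (Real.rpow_le_one hr.le hr1 (sub_nonneg.2 hpσ))

lemma exists_pos_eventually_mul_rpow_le_half {p σ n : ℝ} (hp : 1 ≤ p) (hσ : 0 < σ)
    (hpσ : p * (n - σ) ≤ n) (κ : ℝ) :
    ∃ A > 0, ∀ᶠ r : ℝ in 𝓝[>] 0, κ * (A ^ (1 - p) * r ^ (n - p * (n - σ))) ≤ 1 / 2 := by
  rcases hp.eq_or_lt with rfl | hp
  · refine ⟨1, one_pos, ?_⟩
    have hlim : Tendsto (fun r : ℝ => κ * (1 ^ (1 - 1 : ℝ) * r ^ (n - 1 * (n - σ)))) (𝓝[>] 0)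
        (𝓝 0) := by
      simpa [hσ.ne'] using tendsto_nhdsWithin_of_tendsto_nhds
        (((Real.continuous_rpow_const hσ.le).const_mul κ).tendsto 0)
    exact hlim.eventually_le_const (by norm_num)
  · have hlim : Tendsto (fun A : ℝ => |κ| * A ^ (1 - p)) atTop (𝓝 0) := by
      simpa using (tendsto_rpow_neg_atTop (sub_pos.2 hp)).const_mul |κ|
    obtain ⟨A, hA, hA0⟩ :=
      ((hlim.eventually_le_const one_half_pos).and (eventually_gt_atTop 0)).exists
    refine ⟨A, hA0, ?_⟩
    filter_upwards [Ioc_mem_nhdsGT one_pos] with r hr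
    calc κ * (A ^ (1 - p) * r ^ (n - p * (n - σ)))
        ≤ |κ| * (A ^ (1 - p) * 1) := by
          gcongr
          · exact mul_nonneg (by positivity) (Real.rpow_nonneg hr.1.le _)
          · exact le_abs_self κ
          · exact Real.rpow_le_one hr.1.le hr.2 (sub_nonneg.2 hpσ)
      _ ≤ 1 / 2 := by rwa [mul_one]

end Young

lemma integrable_of_tendsto_of_integral_norm_le {α ι G : Type*} [MeasurableSpace α]
    [NormedAddCommGroup G] {μ : Measure α} {l : Filter ι} [l.NeBot] [l.IsCountablyGenerated]
    {F : ι → α → G} {f : α → G} {M : ℝ}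
    (hlim : ∀ᵐ a ∂μ, Tendsto (fun i => F i a) l (𝓝 (f a)))
    (hF : ∀ i, AEStronglyMeasurable (F i) μ) (hFi : ∀ᶠ i in l, Integrable (F i) μ)
    (hM : ∀ᶠ i in l, ∫ a, ‖F i a‖ ∂μ ≤ M) :
    Integrable f μ := by
  refine ⟨aestronglyMeasurable_of_tendsto_ae l hF hlim, ?_⟩
  calc ∫⁻ a, ‖f a‖ₑ ∂μ = ∫⁻ a, liminf (fun i => ‖F i a‖ₑ) l ∂μ :=
        lintegral_congr_ae (hlim.mono fun a ha => ha.enorm.liminf_eq.symm)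
    _ ≤ liminf (fun i => ∫⁻ a, ‖F i a‖ₑ ∂μ) l := lintegral_liminf_le' fun i => (hF i).enorm
    _ ≤ ENNReal.ofReal M := by
      refine liminf_le_of_frequently_le' (Eventually.frequently ?_)
      filter_upwards [hFi, hM] with i hi hiM
      rw [← ofReal_integral_norm_eq_lintegral_enorm hi]
      exact ENNReal.ofReal_le_ofReal hiM
    _ < ⊤ := ENNReal.ofReal_lt_top

section GaussianAverages

variable {E : Type*} [NormedAddCommGroup E] [InnerProductSpace ℝ E] [FiniteDimensional ℝ E]
  [MeasurableSpace E] [BorelSpace E] {u : E → ℝ} {p σ κ : ℝ}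

lemma rpow_mul_integral_mul_gaussian_le (hp : 1 ≤ p) (hu0 : ∀ x, 0 ≤ u x) {A r : ℝ} (hA : 0 < A)
    (hr : 0 < r) (hu : Integrable fun x => u x * gaussian (r • x))
    (hup : Integrable fun x => u x ^ p * gaussian (r • x)) :
    r ^ σ * ∫ x, u x * gaussian (r • x) ≤ A * (∫ x : E, gaussian x) +
      A ^ (1 - p) * r ^ (finrank ℝ E - p * (finrank ℝ E - σ)) *
        ∫ x, u x ^ p * gaussian (r • x) := by
  have hg : Integrable fun x : E => gaussian (r • x) := integrable_gaussian_smul hr.ne'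
  rw [← rpow_finrank_mul_integral_gaussian_smul hr, ← mul_assoc A, ← integral_const_mul,
    ← integral_const_mul, ← integral_const_mul, ← integral_add (hg.const_mul _) (hup.const_mul _)]
  refine integral_mono (hu.const_mul _) ((hg.const_mul _).add (hup.const_mul _)) fun x => ?_
  have h := mul_le_mul_of_nonneg_right (rpow_mul_le_add_rpow_mul_rpow (σ := σ)
    (n := finrank ℝ E) hp (hu0 x) hA hr) (gaussian_pos (r • x)).le
  linarith

lemma rpow_mul_integral_mul_gaussian_le_add_integral_min (hp : 1 ≤ p)
    (hpσ : p * (finrank ℝ E - σ) ≤ finrank ℝ E) (hu0 : ∀ x, 0 ≤ u x) {A r : ℝ} (hA : 0 < A)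
    (hr : 0 < r) (hr1 : r ≤ 1) (hu : Integrable fun x => u x * gaussian (r • x))
    (hmin : Integrable fun x => min (r ^ σ * u x) (A ^ (1 - p) * u x ^ p)) :
    r ^ σ * ∫ x, u x * gaussian (r • x) ≤
      A * (∫ x : E, gaussian x) + ∫ x, min (r ^ σ * u x) (A ^ (1 - p) * u x ^ p) := by
  have hg : Integrable fun x : E => gaussian (r • x) := integrable_gaussian_smul hr.ne'
  rw [← rpow_finrank_mul_integral_gaussian_smul hr, ← mul_assoc A, ← integral_const_mul,
    ← integral_const_mul, ← integral_add (hg.const_mul _) hmin]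
  refine integral_mono (hu.const_mul _) ((hg.const_mul _).add hmin) fun x => ?_
  have hmin0 : 0 ≤ min (r ^ σ * u x) (A ^ (1 - p) * u x ^ p) := by
    have := hu0 x
    positivity
  calc r ^ σ * (u x * gaussian (r • x)) = r ^ σ * u x * gaussian (r • x) := (mul_assoc _ _ _).symm
    _ ≤ (A * r ^ (finrank ℝ E : ℝ) + min (r ^ σ * u x) (A ^ (1 - p) * u x ^ p)) *
          gaussian (r • x) :=
        mul_le_mul_of_nonneg_right (rpow_mul_le_add_min hp hpσ (hu0 x) hA hr hr1)
          (gaussian_pos _).le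
    _ ≤ A * r ^ (finrank ℝ E : ℝ) * gaussian (r • x) +
          min (r ^ σ * u x) (A ^ (1 - p) * u x ^ p) := by
        rw [add_mul]
        gcongr
        exact mul_le_of_le_one_right hmin0 (gaussian_le_one _)

lemma integrable_rpow_of_integral_mul_gaussian_le (hu : Continuous u) (hu0 : ∀ x, 0 ≤ u x)
    (hp : 1 ≤ p) (hσ : 0 < σ) (hpσ : p * (finrank ℝ E - σ) ≤ finrank ℝ E) (hκ : 0 ≤ κ)
    (hug : ∀ r : ℝ, 0 < r → Integrable fun x => u x * gaussian (r • x))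
    (hupg : ∀ r : ℝ, 0 < r → Integrable fun x => u x ^ p * gaussian (r • x))
    (h : ∀ r : ℝ, 0 < r →
      ∫ x, u x ^ p * gaussian (r • x) ≤ κ * (r ^ σ * ∫ x, u x * gaussian (r • x))) :
    Integrable fun x => u x ^ p := by
  obtain ⟨A, hA, hsmall⟩ := exists_pos_eventually_mul_rpow_le_half hp hσ hpσ κ
  have hup0 (x : E) : 0 ≤ u x ^ p := Real.rpow_nonneg (hu0 x) p
  have hp0 : 0 ≤ p := zero_le_one.trans hp
  refine integrable_of_tendsto_of_integral_norm_le (l := 𝓝[>] (0 : ℝ))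
    (F := fun r x => u x ^ p * gaussian (r • x)) (M := 2 * (κ * (A * ∫ x : E, gaussian x)))
    (.of_forall fun x => ?_) (fun r => Continuous.aestronglyMeasurable (by fun_prop)) ?_ ?_
  · have hcont : Continuous fun r : ℝ => u x ^ p * gaussian (r • x) := by fun_prop
    simpa [gaussian] using tendsto_nhdsWithin_of_tendsto_nhds (hcont.tendsto 0)
  · filter_upwards [self_mem_nhdsWithin] with r hr using hupg r hr
  · filter_upwards [self_mem_nhdsWithin, hsmall] with r (hr : 0 < r) hrA
    have hI : 0 ≤ ∫ x, u x ^ p * gaussian (r • x) :=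
      integral_nonneg fun x => mul_nonneg (hup0 x) (gaussian_pos _).le
    have habsorb := (h r hr).trans (mul_le_mul_of_nonneg_left
      (rpow_mul_integral_mul_gaussian_le hp hu0 hA hr (hug r hr) (hupg r hr)) hκ)
    have hhalf := mul_le_mul_of_nonneg_right hrA hI
    simp only [Real.norm_of_nonneg (mul_nonneg (hup0 _) (gaussian_pos _).le)]
    linarith

lemma tendsto_integral_min_rpow_mul (hu : Continuous u) (hu0 : ∀ x, 0 ≤ u x) (hp : 0 ≤ p)
    (hσ : 0 < σ) (hup : Integrable fun x => u x ^ p) {c : ℝ} (hc : 0 ≤ c) :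
    Tendsto (fun r : ℝ => ∫ x, min (r ^ σ * u x) (c * u x ^ p)) (𝓝[>] 0) (𝓝 0) := by
  suffices Tendsto (fun r : ℝ => ∫ x, min (r ^ σ * u x) (c * u x ^ p)) (𝓝[>] 0)
      (𝓝 (∫ _ : E, (0 : ℝ))) by simpa only [integral_zero] using this
  refine tendsto_integral_filter_of_dominated_convergence (fun x => c * u x ^ p)
    (.of_forall fun r => Continuous.aestronglyMeasurable (by fun_prop)) ?_ (hup.const_mul c)
    (.of_forall fun x => ?_)
  · filter_upwards [self_mem_nhdsWithin] with r (hr : 0 < r)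
    refine .of_forall fun x => ?_
    have := hu0 x
    rw [Real.norm_of_nonneg (by positivity)]
    exact min_le_right _ _
  · have hcont : Continuous fun r : ℝ => min (r ^ σ * u x) (c * u x ^ p) :=
      ((Real.continuous_rpow_const hσ.le).mul_const _).min continuous_const
    have hcu : 0 ≤ c * u x ^ p := mul_nonneg hc (Real.rpow_nonneg (hu0 x) p)
    simpa [hσ.ne', hcu] using tendsto_nhdsWithin_of_tendsto_nhds (hcont.tendsto 0)

lemma integral_rpow_le_of_integral_mul_gaussian_le (hu : Continuous u) (hu0 : ∀ x, 0 ≤ u x)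
    (hp : 1 ≤ p) (hσ : 0 < σ) (hpσ : p * (finrank ℝ E - σ) ≤ finrank ℝ E) (hκ : 0 ≤ κ)
    (hug : ∀ r : ℝ, 0 < r → Integrable fun x => u x * gaussian (r • x))
    (hup : Integrable fun x => u x ^ p)
    (h : ∀ r : ℝ, 0 < r →
      ∫ x, u x ^ p * gaussian (r • x) ≤ κ * (r ^ σ * ∫ x, u x * gaussian (r • x)))
    {A : ℝ} (hA : 0 < A) :
    ∫ x, u x ^ p ≤ κ * (A * ∫ x : E, gaussian x) := by
  have hp0 : 0 ≤ p := zero_le_one.trans hp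
  have hlim : Tendsto (fun r : ℝ => ∫ x, u x ^ p * gaussian (r • x)) (𝓝[>] 0)
      (𝓝 (∫ x, u x ^ p)) := by
    refine tendsto_integral_filter_of_dominated_convergence _
      (.of_forall fun r => Continuous.aestronglyMeasurable (by fun_prop))
      (.of_forall fun r => .of_forall fun x => ?_) hup.norm (.of_forall fun x => ?_)
    · rw [norm_mul, Real.norm_of_nonneg (gaussian_pos _).le]
      exact mul_le_of_le_one_right (norm_nonneg _) (gaussian_le_one _)
    · have hcont : Continuous fun r : ℝ => u x ^ p * gaussian (r • x) := by fun_prop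
      simpa [gaussian] using tendsto_nhdsWithin_of_tendsto_nhds (hcont.tendsto 0)
  have hmin := tendsto_integral_min_rpow_mul hu hu0 hp0 hσ hup (Real.rpow_nonneg hA.le (1 - p))
  have hbound := (hmin.const_add (A * ∫ x : E, gaussian x)).const_mul κ
  rw [add_zero] at hbound
  refine le_of_tendsto_of_tendsto hlim hbound ?_
  filter_upwards [Ioc_mem_nhdsGT one_pos] with r ⟨hr, hr1⟩
  refine (h r hr).trans (mul_le_mul_of_nonneg_left ?_ hκ)
  refine rpow_mul_integral_mul_gaussian_le_add_integral_min hp hpσ hu0 hA hr hr1 (hug r hr) ?_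
  refine (hup.const_mul (A ^ (1 - p))).mono' (Continuous.aestronglyMeasurable (by fun_prop))
    (.of_forall fun x => ?_)
  have := hu0 x
  rw [Real.norm_of_nonneg (by positivity)]
  exact min_le_right _ _

theorem eq_zero_of_integral_rpow_mul_gaussian_le (hu : Continuous u) (hu0 : ∀ x, 0 ≤ u x)
    (hp : 1 ≤ p) (hσ : 0 < σ) (hpσ : p * (finrank ℝ E - σ) ≤ finrank ℝ E) (hκ : 0 ≤ κ)
    (hug : ∀ r : ℝ, 0 < r → Integrable fun x => u x * gaussian (r • x))
    (hupg : ∀ r : ℝ, 0 < r → Integrable fun x => u x ^ p * gaussian (r • x))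
    (h : ∀ r : ℝ, 0 < r →
      ∫ x, u x ^ p * gaussian (r • x) ≤ κ * (r ^ σ * ∫ x, u x * gaussian (r • x))) :
    u = 0 := by
  have hp0 : 0 < p := zero_lt_one.trans_le hp
  have hupc : Continuous fun x => u x ^ p := hu.rpow_const fun _ => .inr hp0.le
  have hup0 (x : E) : 0 ≤ u x ^ p := Real.rpow_nonneg (hu0 x) p
  have hup := integrable_rpow_of_integral_mul_gaussian_le hu hu0 hp hσ hpσ hκ hug hupg h
  have hlim : Tendsto (fun A : ℝ => κ * (A * ∫ x : E, gaussian x)) (𝓝[>] 0) (𝓝 0) := by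
    have hcont : Continuous fun A : ℝ => κ * (A * ∫ x : E, gaussian x) := by fun_prop
    simpa using tendsto_nhdsWithin_of_tendsto_nhds (hcont.tendsto 0)
  have hle : ∫ x, u x ^ p ≤ 0 := by
    refine ge_of_tendsto hlim ?_
    filter_upwards [self_mem_nhdsWithin] with A hA
    exact integral_rpow_le_of_integral_mul_gaussian_le hu hu0 hp hσ hpσ hκ hug hup h hA
  have hae := (integral_eq_zero_iff_of_nonneg hup0 hup).1 (hle.antisymm (integral_nonneg hup0))
  have hzero := (hupc.ae_eq_iff_eq volume continuous_zero).1 hae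
  exact funext fun x => (Real.rpow_eq_zero (hu0 x) hp0.ne').1 (congrFun hzero x)

end GaussianAverages

section StableMeasure

variable {E : Type*} [NormedAddCommGroup E] [NormedSpace ℝ E] [MeasurableSpace E]

/-- Dilation by `r` multiplies `μ` by `r ^ σ`, as for the Lévy measure of a `σ`-stable process. -/
def IsStableMeasure (σ : ℝ) (μ : Measure E) : Prop :=
  ∀ r : ℝ, 0 < r → μ.map (r • ·) = ENNReal.ofReal (r ^ σ) • μ

lemma IsStableMeasure.integrable_comp_smul [BorelSpace E] {σ : ℝ} {μ : Measure E}
    (h : IsStableMeasure σ μ) {f : E → ℝ} (hf : Integrable f μ) {r : ℝ} (hr : 0 < r) :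
    Integrable (fun y => f (r • y)) μ := by
  refine ((Homeomorph.smulOfNeZero r hr.ne').measurableEmbedding.integrable_map_iff).1 ?_
  change Integrable f (μ.map (r • ·))
  rw [h r hr]
  exact hf.smul_measure ENNReal.ofReal_ne_top

lemma IsStableMeasure.integral_comp_smul [BorelSpace E] {σ : ℝ} {μ : Measure E}
    (h : IsStableMeasure σ μ) (f : E → ℝ) {r : ℝ} (hr : 0 < r) :
    ∫ y, f (r • y) ∂μ = r ^ σ * ∫ y, f y ∂μ := by
  calc ∫ y, f (r • y) ∂μ = ∫ y, f y ∂(μ.map (r • ·)) :=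
        ((Homeomorph.smulOfNeZero r hr.ne').measurableEmbedding.integral_map f).symm
    _ = r ^ σ * ∫ y, f y ∂μ := by
        rw [h r hr, integral_smul_measure, ENNReal.toReal_ofReal (by positivity), smul_eq_mul]

end StableMeasure

section Liouville

variable {E : Type*} [NormedAddCommGroup E] [InnerProductSpace ℝ E] [FiniteDimensional ℝ E]
  [MeasurableSpace E] [BorelSpace E] {u : E → ℝ} {p σ β C : ℝ}

lemma integral_rpow_mul_gaussian_le {μ : Measure E} [SFinite μ] (hμσ : IsStableMeasure σ μ)
    (hβ : 0 ≤ β) (hμ : Integrable (levyWeight β) μ) (hu : ContDiff ℝ 2 u)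
    (hu0 : ∀ x, 0 ≤ u x) (hgrowth : ∀ x, |u x| ≤ C * (1 + ‖x‖) ^ β)
    {f : E → ℝ} (hf : Continuous f) (hsup : ∀ x, f x ≤ -∫ y, secondDiff u x y ∂μ) {r : ℝ}
    (hr : 0 < r) (hug : Integrable fun x => u x * gaussian (r • x))
    (hfg : Integrable fun x => f x * gaussian (r • x)) :
    ∫ x, f x * gaussian (r • x) ≤
      2 * (∫ y, (1 - gaussian y) ∂μ) * (r ^ σ * ∫ x, u x * gaussian (r • x)) := by
  refine (integral_mul_le_of_le_neg_integral_secondDiff hβ hμ hu hu0 hgrowth hf hsup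
    (φ := fun x => gaussian (r • x)) (m := fun y => 1 - gaussian (r • y)) (by fun_prop)
    (fun x => (gaussian_pos _).le) ?_ hug hfg (fun y => sub_nonneg.2 (gaussian_le_one _))
    (hμσ.integrable_comp_smul (integrable_one_sub_gaussian hβ hμ) hr)
    (neg_mul_le_secondDiff_gaussian_smul r)).trans_eq ?_
  · exact tendsto_gaussian_cocompact.comp
      (Homeomorph.smulOfNeZero r hr.ne').isClosedEmbedding.tendsto_cocompact
  · rw [hμσ.integral_comp_smul (fun y => 1 - gaussian y) hr]
    ring

theorem eq_zero_of_rpow_le_neg_integral_secondDiff {μ : Measure E} [SFinite μ]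
    (hμσ : IsStableMeasure σ μ) (hβ : 0 ≤ β) (hμ : Integrable (levyWeight β) μ) (hp : 1 ≤ p)
    (hσ : 0 < σ) (hpσ : p * (finrank ℝ E - σ) ≤ finrank ℝ E) (hu : ContDiff ℝ 2 u)
    (hu0 : ∀ x, 0 ≤ u x) (hgrowth : ∀ x, |u x| ≤ C * (1 + ‖x‖) ^ β)
    (hsup : ∀ x, u x ^ p ≤ -∫ y, secondDiff u x y ∂μ) :
    u = 0 := by
  have hp0 : 0 ≤ p := zero_le_one.trans hp
  have hup : Continuous fun x => u x ^ p := hu.continuous.rpow_const fun _ => .inr hp0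
  have hupgrowth (x : E) : |u x ^ p| ≤ C ^ p * (1 + ‖x‖) ^ (β * p) := by
    have hC : 0 ≤ C := (abs_nonneg _).trans (by simpa using hgrowth 0)
    rw [Real.rpow_mul (by positivity), ← Real.mul_rpow hC (by positivity)]
    exact (Real.abs_rpow_le_abs_rpow _ _).trans
      (Real.rpow_le_rpow (abs_nonneg _) (hgrowth x) hp0)
  have hug (r : ℝ) (hr : 0 < r) : Integrable fun x => u x * gaussian (r • x) :=
    integrable_mul_gaussian_smul hu.continuous.aestronglyMeasurable hgrowth hr.ne'
  have hupg (r : ℝ) (hr : 0 < r) : Integrable fun x => u x ^ p * gaussian (r • x) :=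
    integrable_mul_gaussian_smul hup.aestronglyMeasurable hupgrowth hr.ne'
  exact eq_zero_of_integral_rpow_mul_gaussian_le hu.continuous hu0 hp hσ hpσ
    (mul_nonneg two_pos.le (integral_nonneg fun y => sub_nonneg.2 (gaussian_le_one y))) hug hupg
    fun r hr => integral_rpow_mul_gaussian_le hμσ hβ hμ hu hu0 hgrowth hup hsup hr
      (hug r hr) (hupg r hr)

end Liouville

section StableDensity

variable {E : Type*} [NormedAddCommGroup E] [NormedSpace ℝ E] {σ D : ℝ} {a : E → ℝ}

/-- The density of the `σ`-stable Lévy measure with spectral density `a`, of which only the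
restriction to the unit sphere matters. -/
noncomputable def stableDensity (σ : ℝ) (a : E → ℝ) (y : E) : ℝ :=
  ‖y‖ ^ (-(finrank ℝ E + σ)) * a (‖y‖⁻¹ • y)

lemma stableDensity_zero (hσ : 0 < σ) : stableDensity σ a 0 = 0 := by
  rw [stableDensity, norm_zero, Real.zero_rpow (neg_ne_zero.2 (by positivity)), zero_mul]

lemma stableDensity_nonneg (hσ : 0 < σ) (ha0 : ∀ θ, ‖θ‖ = 1 → 0 ≤ a θ) (y : E) :
    0 ≤ stableDensity σ a y := by
  rcases eq_or_ne y 0 with rfl | hy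
  · rw [stableDensity_zero hσ]
  · exact mul_nonneg (by positivity) (ha0 _ (norm_smul_inv_norm (𝕜 := ℝ) hy))

lemma stableDensity_le (hσ : 0 < σ) (haD : ∀ θ, ‖θ‖ = 1 → a θ ≤ D) (y : E) :
    stableDensity σ a y ≤ D * ‖y‖ ^ (-(finrank ℝ E + σ)) := by
  rcases eq_or_ne y 0 with rfl | hy
  · rw [stableDensity_zero hσ, norm_zero, Real.zero_rpow (neg_ne_zero.2 (by positivity)), mul_zero]
  · rw [mul_comm D]
    exact mul_le_mul_of_nonneg_left (haD _ (norm_smul_inv_norm (𝕜 := ℝ) hy)) (by positivity)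

lemma stableDensity_smul {r : ℝ} (hr : 0 < r) (y : E) :
    stableDensity σ a (r • y) = r ^ (-(finrank ℝ E + σ)) * stableDensity σ a y := by
  rw [stableDensity, stableDensity, norm_smul, Real.norm_of_nonneg hr.le,
    Real.mul_rpow hr.le (norm_nonneg y), mul_inv, smul_smul, mul_right_comm r⁻¹,
    inv_mul_cancel₀ hr.ne', one_mul, mul_assoc]

lemma measurable_stableDensity [MeasurableSpace E] [BorelSpace E] [SecondCountableTopology E]
    (ha : Measurable a) : Measurable (stableDensity σ a) :=
  Measurable.mul (by fun_prop) (ha.comp (measurable_norm.inv.smul measurable_id))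

variable [FiniteDimensional ℝ E] [MeasureSpace E] [BorelSpace E]
  [(volume : Measure E).IsAddHaarMeasure]

lemma isStableMeasure_withDensity_stableDensity (ha : Measurable a) :
    IsStableMeasure σ (volume.withDensity fun y => ENNReal.ofReal (stableDensity σ a y)) := by
  intro r hr
  have hk : Measurable fun y => ENNReal.ofReal (stableDensity σ a y) :=
    (measurable_stableDensity ha).ennreal_ofReal
  have hscale (y : E) : ENNReal.ofReal (stableDensity σ a y) =
      ENNReal.ofReal (r ^ (finrank ℝ E + σ)) * ENNReal.ofReal (stableDensity σ a (r • y)) := by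
    rw [← ENNReal.ofReal_mul (by positivity), stableDensity_smul hr, ← mul_assoc,
      ← Real.rpow_add hr, add_neg_cancel, Real.rpow_zero, one_mul]
  refine Measure.ext_of_lintegral _ fun f hf => ?_
  have hfr : Measurable fun y => f (r • y) := hf.comp (measurable_const_smul r)
  have hfk : Measurable fun y => ENNReal.ofReal (stableDensity σ a y) * f y := hk.mul hf
  have hfkr : Measurable fun y => ENNReal.ofReal (stableDensity σ a (r • y)) * f (r • y) :=
    hfk.comp (measurable_const_smul r)
  rw [lintegral_map hf (measurable_const_smul r), lintegral_smul_measure,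
    lintegral_withDensity_eq_lintegral_mul _ hk hfr, lintegral_withDensity_eq_lintegral_mul _ hk hf]
  calc ∫⁻ y, ENNReal.ofReal (stableDensity σ a y) * f (r • y)
      = ENNReal.ofReal (r ^ (finrank ℝ E + σ)) *
          ∫⁻ y, ENNReal.ofReal (stableDensity σ a (r • y)) * f (r • y) := by
        rw [← lintegral_const_mul _ hfkr]
        simp only [← mul_assoc, ← hscale]
    _ = ENNReal.ofReal (r ^ (finrank ℝ E + σ)) * (ENNReal.ofReal (r ^ (-finrank ℝ E : ℝ)) *
          ∫⁻ y, ENNReal.ofReal (stableDensity σ a y) * f y) := by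
        rw [← lintegral_map hfk (measurable_const_smul r), Measure.map_addHaar_smul _ hr.ne',
          lintegral_smul_measure, smul_eq_mul, abs_of_pos (by positivity), Real.rpow_neg hr.le,
          Real.rpow_natCast]
    _ = ENNReal.ofReal (r ^ σ) • ∫⁻ y, ENNReal.ofReal (stableDensity σ a y) * f y := by
        rw [← mul_assoc, ← ENNReal.ofReal_mul (by positivity), ← Real.rpow_add hr, smul_eq_mul,
          add_neg_cancel_comm]

lemma integrable_levyWeight_mul_norm_rpow [Nontrivial E] {β : ℝ} (hσ : σ < 2) (hβσ : β < σ) :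
    Integrable fun y : E => levyWeight β y * ‖y‖ ^ (-(finrank ℝ E + σ)) := by
  have hn : 1 ≤ finrank ℝ E := finrank_pos
  refine (integrable_fun_norm_addHaar (E := E) volume (f := fun t : ℝ =>
    (if t ≤ 1 then t ^ 2 else t ^ β) * t ^ (-(finrank ℝ E + σ)))).2 ?_
  have hpow {t : ℝ} (ht : 0 < t) :
      t ^ (finrank ℝ E - 1) * t ^ (-(finrank ℝ E + σ)) = t ^ (-1 - σ) := by
    rw [← Real.rpow_natCast, ← Real.rpow_add ht]
    push_cast [hn]
    ring_nf
  rw [← Set.Ioc_union_Ioi_eq_Ioi zero_le_one, integrableOn_union]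
  constructor
  · have h := (intervalIntegral.intervalIntegrable_rpow' (a := 0) (b := 1)
      (by linarith : -1 < 1 - σ)).1
    refine h.congr_fun (fun t ht => ?_) measurableSet_Ioc
    simp only [smul_eq_mul, if_pos ht.2]
    rw [mul_left_comm, hpow ht.1, ← Real.rpow_natCast, ← Real.rpow_add ht.1]
    push_cast
    ring_nf
  · refine (integrableOn_Ioi_rpow_of_lt (by linarith : β - 1 - σ < -1) one_pos).congr_fun
      (fun t ht => ?_) measurableSet_Ioi
    have ht0 : 0 < t := one_pos.trans ht
    simp only [smul_eq_mul, if_neg (not_le.2 (Set.mem_Ioi.1 ht))]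
    rw [mul_left_comm, hpow ht0, ← Real.rpow_add ht0]
    ring_nf

lemma integrable_levyWeight_mul_stableDensity (ha : Measurable a)
    (ha0 : ∀ θ, ‖θ‖ = 1 → 0 ≤ a θ) (haD : ∀ θ, ‖θ‖ = 1 → a θ ≤ D) {β : ℝ} (hσ0 : 0 < σ)
    (hσ : σ < 2) (hβσ : β < σ) :
    Integrable fun y : E => levyWeight β y * stableDensity σ a y := by
  rcases subsingleton_or_nontrivial E with hE | hE
  · simp [Subsingleton.elim _ (0 : E), stableDensity_zero hσ0]
  · refine ((integrable_levyWeight_mul_norm_rpow hσ hβσ).const_mul D).mono'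
      ((measurable_levyWeight β).mul (measurable_stableDensity ha)).aestronglyMeasurable
      (.of_forall fun y => ?_)
    rw [Real.norm_of_nonneg
      (mul_nonneg (levyWeight_nonneg β y) (stableDensity_nonneg hσ0 ha0 y)), mul_left_comm]
    exact mul_le_mul_of_nonneg_left (stableDensity_le hσ0 haD y) (levyWeight_nonneg β y)

end StableDensity

theorem stmt18_general {E : Type*} [NormedAddCommGroup E] [InnerProductSpace ℝ E]
    [FiniteDimensional ℝ E] [MeasurableSpace E] [BorelSpace E] {s p : ℝ} (hs0 : 0 < s)
    (hs1 : s < 1) (hp1 : 1 ≤ p) (hp2 : p * (finrank ℝ E - 2 * s) ≤ finrank ℝ E) {a : E → ℝ}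
    (ha : Measurable a) (ha0 : ∀ θ, ‖θ‖ = 1 → 0 ≤ a θ) {D : ℝ} (haD : ∀ θ, ‖θ‖ = 1 → a θ ≤ D)
    {u : E → ℝ} (hu : ContDiff ℝ 2 u) (hu0 : ∀ x, 0 ≤ u x)
    (hgrowth : ∃ δ C R₀ : ℝ, 0 < δ ∧ δ ≤ 2 * s ∧
      ∀ x, R₀ ≤ ‖x‖ → |u x| ≤ C * ‖x‖ ^ (2 * s - δ))
    (hsup : ∀ x, u x ^ p ≤ -∫ y, (u (x + y) + u (x - y) - 2 * u x) *
      ‖y‖ ^ (-((finrank ℝ E : ℝ) + 2 * s)) * a (‖y‖⁻¹ • y)) :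
    u = 0 := by
  obtain ⟨δ, C, R₀, hδ0, hδ, hC⟩ := hgrowth
  obtain ⟨K, hK⟩ := exists_abs_le_one_add_norm_rpow hu.continuous (sub_nonneg.2 hδ) hC
  have hσ : 0 < 2 * s := by positivity
  have hk : Measurable fun y => ENNReal.ofReal (stableDensity (2 * s) a y) :=
    (measurable_stableDensity ha).ennreal_ofReal
  have hk_top : ∀ᵐ y : E, ENNReal.ofReal (stableDensity (2 * s) a y) < ⊤ :=
    .of_forall fun _ => ENNReal.ofReal_lt_top
  have hk_toReal (y : E) : (ENNReal.ofReal (stableDensity (2 * s) a y)).toReal =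
      stableDensity (2 * s) a y := ENNReal.toReal_ofReal (stableDensity_nonneg hσ ha0 y)
  refine eq_zero_of_rpow_le_neg_integral_secondDiff
    (isStableMeasure_withDensity_stableDensity ha) (sub_nonneg.2 hδ) ?_ hp1 hσ hp2 hu hu0 hK
    fun x => ?_
  · rw [integrable_withDensity_iff hk hk_top]
    simp only [hk_toReal]
    exact integrable_levyWeight_mul_stableDensity ha ha0 haD hσ (by linarith) (by linarith)
  · rw [integral_withDensity_eq_integral_toReal_smul hk hk_top]
    simp only [hk_toReal, smul_eq_mul, mul_comm (stableDensity _ _ _)]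
    simpa only [mul_assoc, secondDiff, stableDensity] using hsup x

end

/-- Liouville theorem in the whole space: for `N ≥ 2`, `1 ≤ p ≤ N/(N-2s)`, a stable
operator `L` with bounded even spectral density `a ≥ 0` that is bounded below on a cone,
any nonnegative `u ∈ C²(ℝ^N) ∩ 𝓛_s` with `-Lu ≥ u^p` in `ℝ^N` vanishes identically. -/
theorem stmt18 (N : ℕ) (hN : 2 ≤ N) (s p : ℝ) (hs0 : 0 < s) (hs1 : s < 1)
    (hp1 : 1 ≤ p) (hp2 : p ≤ (N : ℝ) / ((N : ℝ) - 2 * s))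
    (a : EuclideanSpace ℝ (Fin N) → ℝ) (ha : Measurable a)
    (hanonneg : ∀ θ, 0 ≤ a θ) (D : ℝ) (habd : ∀ θ, a θ ≤ D)
    (haeven : ∀ θ, a (-θ) = a θ)
    (ν₀ : EuclideanSpace ℝ (Fin N)) (hν₀ : ‖ν₀‖ = 1)
    (τ₀ : ℝ) (hτ₀0 : 0 < τ₀) (hτ₀1 : τ₀ ≤ 1)
    (d : ℝ) (hd : 0 < d)
    (hacone : ∀ θ : EuclideanSpace ℝ (Fin N), ‖θ‖ = 1 →
      (1 - τ₀) * ‖θ‖ ≤ abs ⟪θ, ν₀⟫ → d ≤ a θ)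
    (u : EuclideanSpace ℝ (Fin N) → ℝ) (huC2 : ContDiff ℝ 2 u) (hu0 : ∀ x, 0 ≤ u x)
    (hugrowth : ∃ δ C R₀ : ℝ, 0 < δ ∧ δ ≤ 2 * s ∧
      ∀ x : EuclideanSpace ℝ (Fin N), R₀ ≤ ‖x‖ → |u x| ≤ C * ‖x‖ ^ (2 * s - δ))
    (hsup : ∀ x : EuclideanSpace ℝ (Fin N),
      u x ^ p ≤ -∫ y : EuclideanSpace ℝ (Fin N),
        (u (x + y) + u (x - y) - 2 * u x) * ‖y‖ ^ (-((N : ℝ) + 2 * s)) * a (‖y‖⁻¹ • y)) :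
    ∀ x, u x = 0 := by
  have hN' : (2 : ℝ) ≤ N := by exact_mod_cast hN
  exact congrFun <| stmt18_general hs0 hs1 hp1
    (by rw [finrank_euclideanSpace_fin]; exact (le_div_iff₀ (by linarith)).1 hp2) ha
    (fun θ _ => hanonneg θ) (fun θ _ => habd θ) huC2 hu0 hugrowth
    (by simpa only [finrank_euclideanSpace_fin] using hsup)
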